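/- arXiv:1207.6861 — 5 statements merged into one kernel-verified Lean document; each statement's English description precedes it below -/
import Mathlib

section
/- The function 𝔄 is complex differentiable on all of ℂ (entire), and it solves the Airy equation: 𝔄''(z) = z·𝔄(z) for every z ∈ ℂ. -/
/-- The Airy-type function 𝔄, defined as the contour integral
`π^{-1/2} ∫_Γ exp(t³/3 − z·t) dt` over the contour Γ running from −∞ along the
negative real axis to 0 and then from 0 along the ray `e^{-iπ/3}·ℝ⁺`. -/
noncomputable def Afun (z : ℂ) : ℂ :=
  (Real.sqrt Real.pi : ℂ)⁻¹ *
    ((∫ s in Set.Ioi (0:ℝ), Complex.exp (-(s:ℂ)^3/3 + z * s)) +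
      Complex.exp (-(Real.pi * Complex.I)/3) *
        ∫ s in Set.Ioi (0:ℝ),
          Complex.exp (-(s:ℂ)^3/3 - Complex.exp (-(Real.pi * Complex.I)/3) * z * s))

open MeasureTheory Set Filter Topology

/-- The moment integral `∫₀^∞ sⁿ exp(−s³/3 + z·s) ds`. -/
noncomputable def airyMoment (n : ℕ) (z : ℂ) : ℂ :=
  ∫ s in Ioi (0 : ℝ), (s : ℂ) ^ n * Complex.exp (-(s : ℂ) ^ 3 / 3 + z * s)

theorem norm_exp_cubic_le {z : ℂ} {a s : ℝ} (hz : ‖z‖ + 1 ≤ a) (hs : 0 ≤ s) :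
    ‖Complex.exp (-(s : ℂ) ^ 3 / 3 + z * s)‖ ≤ Real.exp (a ^ 3) * Real.exp (-s) := by
  rw [Complex.norm_exp, ← Real.exp_add, Real.exp_le_exp]
  have hre : (-(s : ℂ) ^ 3 / 3 + z * s).re = -s ^ 3 / 3 + z.re * s := by
    have : (-(s : ℂ) ^ 3 / 3 + z * s) = ((-s ^ 3 / 3 : ℝ) : ℂ) + z * s := by push_cast; ring
    rw [this, Complex.add_re, Complex.ofReal_re, Complex.re_mul_ofReal]
  rw [hre]
  have ha : 1 ≤ a := by linarith [norm_nonneg z]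
  have hzs : z.re * s ≤ (a - 1) * s :=
    mul_le_mul_of_nonneg_right (by linarith [Complex.re_le_norm z]) hs
  have hcube : 0 ≤ (s - a) ^ 2 * (s + 2 * a) := by positivity
  have has : a * s ≤ a ^ 2 * s := mul_le_mul_of_nonneg_right (by nlinarith) hs
  have ha3 : 0 ≤ a ^ 3 := by positivity
  nlinarith

theorem norm_airyMoment_integrand_le (n : ℕ) {z : ℂ} {a s : ℝ} (hz : ‖z‖ + 1 ≤ a) (hs : 0 ≤ s) :
    ‖(s : ℂ) ^ n * Complex.exp (-(s : ℂ) ^ 3 / 3 + z * s)‖ ≤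
      Real.exp (a ^ 3) * (Real.exp (-s) * s ^ n) := by
  rw [norm_mul, norm_pow, Complex.norm_real, Real.norm_of_nonneg hs]
  calc s ^ n * ‖Complex.exp (-(s : ℂ) ^ 3 / 3 + z * s)‖
      ≤ s ^ n * (Real.exp (a ^ 3) * Real.exp (-s)) :=
        mul_le_mul_of_nonneg_left (norm_exp_cubic_le hz hs) (by positivity)
    _ = Real.exp (a ^ 3) * (Real.exp (-s) * s ^ n) := by ring

theorem integrableOn_exp_neg_mul_pow (n : ℕ) :
    IntegrableOn (fun s : ℝ => Real.exp (-s) * s ^ n) (Ioi 0) := by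
  have h := Real.GammaIntegral_convergent (s := n + 1) (by positivity)
  simpa using h

theorem integrableOn_airyMoment_integrand (n : ℕ) (z : ℂ) :
    IntegrableOn (fun s : ℝ => (s : ℂ) ^ n * Complex.exp (-(s : ℂ) ^ 3 / 3 + z * s)) (Ioi 0) := by
  refine ((integrableOn_exp_neg_mul_pow n).const_mul (Real.exp ((‖z‖ + 1) ^ 3))).mono'
    (by fun_prop) ?_
  filter_upwards [ae_restrict_mem measurableSet_Ioi] with s hs
  exact norm_airyMoment_integrand_le n le_rfl (le_of_lt hs)

theorem hasDerivAt_airyMoment (n : ℕ) (z : ℂ) :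
    HasDerivAt (airyMoment n) (airyMoment (n + 1) z) z := by
  refine (hasDerivAt_integral_of_dominated_loc_of_deriv_le
    (F := fun w (s : ℝ) => (s : ℂ) ^ n * Complex.exp (-(s : ℂ) ^ 3 / 3 + w * s))
    (F' := fun w (s : ℝ) => (s : ℂ) ^ (n + 1) * Complex.exp (-(s : ℂ) ^ 3 / 3 + w * s))
    (bound := fun s => Real.exp ((‖z‖ + 2) ^ 3) * (Real.exp (-s) * s ^ (n + 1)))
    (Metric.ball_mem_nhds z one_pos) (Eventually.of_forall fun w => by fun_prop)
    (integrableOn_airyMoment_integrand n z) (by fun_prop) ?_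
    ((integrableOn_exp_neg_mul_pow (n + 1)).const_mul _) ?_).2
  · filter_upwards [ae_restrict_mem measurableSet_Ioi] with s hs w hw
    refine norm_airyMoment_integrand_le (n + 1) ?_ (le_of_lt hs)
    have := norm_le_norm_add_norm_sub' w z
    rw [mem_ball_iff_norm] at hw
    linarith
  · refine Eventually.of_forall fun s w _ => ?_
    have h : HasDerivAt (fun w : ℂ => -(s : ℂ) ^ 3 / 3 + w * s) (s : ℂ) w := by
      simpa using ((hasDerivAt_id w).mul_const (s : ℂ)).const_add (-(s : ℂ) ^ 3 / 3)
    refine (h.cexp.const_mul ((s : ℂ) ^ n)).congr_deriv ?_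
    ring

theorem airyMoment_two (z : ℂ) : airyMoment 2 z = z * airyMoment 0 z + 1 := by
  have hint := ((integrableOn_airyMoment_integrand 0 z).const_mul z).sub
    (integrableOn_airyMoment_integrand 2 z)
  have hlim : Tendsto (fun s : ℝ => Complex.exp (-(s : ℂ) ^ 3 / 3 + z * s)) atTop (𝓝 0) := by
    refine squeeze_zero_norm' (a := fun s => Real.exp ((‖z‖ + 1) ^ 3) * Real.exp (-s)) ?_ ?_
    · filter_upwards [eventually_ge_atTop 0] with s hs
      exact norm_exp_cubic_le le_rfl hs
    · simpa using Real.tendsto_exp_neg_atTop_nhds_zero.const_mul (Real.exp ((‖z‖ + 1) ^ 3))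
  have hftc := integral_Ioi_of_hasDerivAt_of_tendsto' (a := (0 : ℝ)) (fun s _ => ?_) hint hlim
  · rw [integral_sub' ((integrableOn_airyMoment_integrand 0 z).const_mul z)
      (integrableOn_airyMoment_integrand 2 z), integral_const_mul] at hftc
    change z * airyMoment 0 z - airyMoment 2 z = _ at hftc
    simp only [Complex.ofReal_zero, mul_zero, zero_sub] at hftc
    norm_num at hftc
    linear_combination -hftc
  · have hs : HasDerivAt (fun s : ℝ => (s : ℂ)) 1 s := Complex.ofRealCLM.hasDerivAt
    have h := (((hs.pow 3).neg.div_const 3).add (hs.const_mul z)).cexp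
    refine h.congr_deriv ?_
    simp only [Pi.sub_apply, Pi.add_apply, Pi.neg_apply, Pi.pow_apply]
    push_cast
    ring

theorem Afun_eq_airyMoment (z : ℂ) :
    Afun z = (Real.sqrt Real.pi : ℂ)⁻¹ * (airyMoment 0 z +
      Complex.exp (-(Real.pi * Complex.I) / 3) *
        airyMoment 0 (-Complex.exp (-(Real.pi * Complex.I) / 3) * z)) := by
  simp only [Afun, airyMoment, pow_zero, one_mul, neg_mul, ← sub_eq_add_neg]

theorem hasDerivAt_airyMoment_mul (n : ℕ) (c z : ℂ) :
    HasDerivAt (fun w => airyMoment n (c * w)) (c * airyMoment (n + 1) (c * z)) z := by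
  have h : HasDerivAt (fun w : ℂ => c * w) c z := by
    simpa using (hasDerivAt_id z).const_mul c
  exact ((hasDerivAt_airyMoment n (c * z)).comp z h).congr_deriv (mul_comm _ _)

theorem hasDerivAt_Afun (z : ℂ) :
    HasDerivAt Afun ((Real.sqrt Real.pi : ℂ)⁻¹ * (airyMoment 1 z +
      Complex.exp (-(Real.pi * Complex.I) / 3) * (-Complex.exp (-(Real.pi * Complex.I) / 3) *
        airyMoment 1 (-Complex.exp (-(Real.pi * Complex.I) / 3) * z)))) z := by
  rw [funext Afun_eq_airyMoment]
  exact ((hasDerivAt_airyMoment 0 z).add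
    ((hasDerivAt_airyMoment_mul 0 _ z).const_mul _)).const_mul _

theorem exp_neg_pi_mul_I_div_three_pow_three :
    Complex.exp (-(Real.pi * Complex.I) / 3) ^ 3 = -1 := by
  rw [← Complex.exp_nat_mul, ← Complex.exp_neg_pi_mul_I]
  congr 1
  push_cast
  ring

/-- The function 𝔄 is entire and solves the Airy equation . -/
theorem Afun_entire_and_airy :
    Differentiable ℂ Afun ∧ ∀ z : ℂ, deriv (deriv Afun) z = z * Afun z := by
  refine ⟨fun z => (hasDerivAt_Afun z).differentiableAt, fun z => ?_⟩
  have hderiv := ((hasDerivAt_airyMoment 1 z).add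
    (((hasDerivAt_airyMoment_mul 1 (-Complex.exp (-(Real.pi * Complex.I) / 3)) z).const_mul
      (-Complex.exp (-(Real.pi * Complex.I) / 3))).const_mul
      (Complex.exp (-(Real.pi * Complex.I) / 3)))).const_mul (Real.sqrt Real.pi : ℂ)⁻¹
  rw [funext fun w => (hasDerivAt_Afun w).deriv]
  refine hderiv.deriv.trans ?_
  rw [airyMoment_two, airyMoment_two, Afun_eq_airyMoment]
  have hω := exp_neg_pi_mul_I_div_three_pow_three
  generalize Complex.exp (-(Real.pi * Complex.I) / 3) = ω at hω ⊢
  linear_combination (Real.sqrt Real.pi : ℂ)⁻¹ * (1 - ω * z * airyMoment 0 (-ω * z)) * hω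
end

section
/- Suppose (α, β) solves the Riccati system on a closed subinterval [u₀, u₂] ⊆ [u₀, u₁] with β(u₀) > 0. Set C := inf_{u ∈ [u₀,u₁]} Re V(u). If g : [u₀, u₂] → ℝ is differentiable with g'(u) = C − g(u)² for all u and g(u₂) = α(u₂), then α(u) ≤ g(u) for all u ∈ [u₀, u₂]. -/
open Set in
/-- Backward Grönwall inequality: if `w' ≥ -f w` on `[a, b]` and `w b ≤ 0`, then `w ≤ 0` on `[a, b]`. -/
theorem nonpos_of_neg_mul_le_deriv {a b : ℝ} (hab : a ≤ b) {f w w' : ℝ → ℝ}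
    (hf : ContinuousOn f (Icc a b)) (hw : ∀ u ∈ Icc a b, HasDerivAt w (w' u) u)
    (hle : ∀ u ∈ Icc a b, -(f u * w u) ≤ w' u) (hb : w b ≤ 0) :
    ∀ u ∈ Icc a b, w u ≤ 0 := by
  set F : ℝ → ℝ := IccExtend hab ((Icc a b).domRestrict f)
  have hF : Continuous F := hf.domRestrict.Icc_extend'
  have hFf : ∀ u ∈ Icc a b, F u = f u := fun u hu => IccExtend_of_mem hab _ hu
  set P : ℝ → ℝ := fun u => ∫ x in a..u, F x
  have hP : ∀ u, HasDerivAt P (F u) u := fun u => (hF.integral_hasStrictDerivAt a u).hasDerivAt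
  have hd : ∀ u ∈ Icc a b, HasDerivAt (fun u => w u * Real.exp (P u))
      (w' u * Real.exp (P u) + w u * (Real.exp (P u) * F u)) u :=
    fun u hu => (hw u hu).mul (hP u).exp
  have hmono : MonotoneOn (fun u => w u * Real.exp (P u)) (Icc a b) := by
    refine monotoneOn_of_deriv_nonneg (convex_Icc a b)
      (fun u hu => (hd u hu).continuousAt.continuousWithinAt)
      (fun u hu => (hd u (interior_subset hu)).differentiableAt.differentiableWithinAt)
      fun u hu => ?_
    have hu' := interior_subset hu
    rw [(hd u hu').deriv, hFf u hu']
    have h := mul_nonneg (by linarith [hle u hu'] : 0 ≤ w' u + f u * w u) (Real.exp_pos (P u)).le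
    linarith
  intro u hu
  have h := hmono hu (right_mem_Icc.2 hab) hu.2
  exact nonpos_of_mul_nonpos_left (h.trans (mul_nonpos_of_nonpos_of_nonneg hb (Real.exp_pos _).le))
    (Real.exp_pos _)

/-- Lemma 2.4: comparison bound for the real part of a Riccati solution.
Let (α, β) solve the Riccati system associated with V on [u₀, u₂] ⊆ [u₀, u₁]
with β(u₀) > 0, where Im V ≥ 0 on [u₀, u₁].  With C := inf of Re V over [u₀, u₁],
if g solves g' = C − g² with g(u₂) = α(u₂), then α ≤ g on [u₀, u₂]. -/
theorem riccati_real_part_upper_bound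
    (u₀ u₁ u₂ : ℝ) (h01 : u₀ < u₁) (h02 : u₀ ≤ u₂) (h21 : u₂ ≤ u₁)
    (V : ℝ → ℂ) (hVc : ContinuousOn V (Set.Icc u₀ u₁))
    (hVim : ∀ u ∈ Set.Icc u₀ u₁, 0 ≤ (V u).im)
    (α β : ℝ → ℝ)
    (hα : ∀ u ∈ Set.Icc u₀ u₂, HasDerivAt α ((V u).re - α u ^ 2 + β u ^ 2) u)
    (hβ : ∀ u ∈ Set.Icc u₀ u₂, HasDerivAt β ((V u).im - 2 * α u * β u) u)
    (hβ0 : 0 < β u₀)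
    (C : ℝ) (hC : C = sInf ((fun u => (V u).re) '' Set.Icc u₀ u₁))
    (g : ℝ → ℝ)
    (hg : ∀ u ∈ Set.Icc u₀ u₂, HasDerivAt g (C - g u ^ 2) u)
    (hg2 : g u₂ = α u₂) :
    ∀ u ∈ Set.Icc u₀ u₂, α u ≤ g u := by
  have hCle : ∀ u ∈ Set.Icc u₀ u₂, C ≤ (V u).re := fun u hu => by
    rw [hC]
    exact csInf_le (isCompact_Icc.image_of_continuousOn
      (Complex.continuous_re.comp_continuousOn hVc)).bddBelow ⟨u, ⟨hu.1, hu.2.trans h21⟩, rfl⟩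
  have hw := nonpos_of_neg_mul_le_deriv h02 (f := fun u => α u + g u) (w := fun u => α u - g u)
    (fun u hu => ((hα u hu).continuousAt.add (hg u hu).continuousAt).continuousWithinAt)
    (fun u hu => (hα u hu).sub (hg u hu))
    (fun u hu => by nlinarith [hCle u hu, sq_nonneg (β u)])
    (by simp [hg2])
  exact fun u hu => sub_nonpos.1 (hw u hu)
end

section
/- For every a ∈ ℂ and each choice of sign ±, the function z ↦ U_a^±(z) is complex differentiable on all of ℂ (entire) and satisfies the Weber equation (U_a^±)''(z) = (z²/4 + a)·U_a^±(z) for all z ∈ ℂ. -/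
/-- The parabolic cylinder function U_a^± : the contour integral
exp(−z²/4)·∫_{ℝ ± i} exp(z·t − t²/2)·t^{a−1/2} dt along the horizontal line ℝ + σ·i
(σ = 1 for U_a^+ and σ = −1 for U_a^−), the power taken with the principal branch
of the logarithm. -/
noncomputable def Upc (σ : ℝ) (a z : ℂ) : ℂ :=
  Complex.exp (-z^2/4) *
    ∫ t : ℝ, Complex.exp (z * (t + σ * Complex.I) - (t + σ * Complex.I)^2/2) *
      Complex.exp ((a - 1/2) * Complex.log (t + σ * Complex.I))

open MeasureTheory Filter

/-- The integrand `exp(z·s − s²/2)·s^b` at the point `s = t + σ·i`. -/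
noncomputable def pcKernel (σ : ℝ) (b z : ℂ) (t : ℝ) : ℂ :=
  Complex.exp (z * (t + σ * Complex.I) - (t + σ * Complex.I) ^ 2 / 2) *
    Complex.exp (b * Complex.log (t + σ * Complex.I))

theorem line_mem_slitPlane {σ : ℝ} (hσ : |σ| = 1) (t : ℝ) :
    (t + σ * Complex.I : ℂ) ∈ Complex.slitPlane := by
  refine Or.inr ?_
  have : σ ≠ 0 := fun h => by simp [h] at hσ
  simpa using this

/-- Multiplying the integrand by `s` raises its exponent by one. -/
theorem pcKernel_add_one {σ : ℝ} (hσ : |σ| = 1) (b z : ℂ) (t : ℝ) :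
    pcKernel σ (b + 1) z t = (t + σ * Complex.I) * pcKernel σ b z t := by
  have h0 := Complex.slitPlane_ne_zero (line_mem_slitPlane hσ t)
  rw [pcKernel, pcKernel, add_mul, one_mul, Complex.exp_add, Complex.exp_log h0]
  ring

theorem continuous_pcKernel {σ : ℝ} (hσ : |σ| = 1) (b z : ℂ) :
    Continuous (pcKernel σ b z) := by
  unfold pcKernel
  have : Continuous fun t : ℝ => Complex.log (t + σ * Complex.I) :=
    Continuous.clog (by fun_prop) (line_mem_slitPlane hσ)
  fun_prop

theorem norm_line_le {σ : ℝ} (hσ : |σ| = 1) (t : ℝ) :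
    ‖(t + σ * Complex.I : ℂ)‖ ≤ |t| + 1 := by
  refine (norm_add_le _ _).trans_eq ?_
  simp [hσ]

theorem norm_log_line_le {σ : ℝ} (hσ : |σ| = 1) (t : ℝ) :
    ‖Complex.log (t + σ * Complex.I)‖ ≤ |t| + 1 + Real.pi := by
  set s : ℂ := t + σ * Complex.I with hs
  have h1 : 1 ≤ ‖s‖ := by
    have := Complex.abs_im_le_norm s
    simpa [hs, hσ] using this
  have hlog : |Real.log ‖s‖| ≤ |t| + 1 := by
    rw [abs_of_nonneg (Real.log_nonneg h1)]
    exact (Real.log_le_self (norm_nonneg s)).trans (norm_line_le hσ t)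
  calc ‖Complex.log s‖ ≤ |(Complex.log s).re| + |(Complex.log s).im| :=
        Complex.norm_le_abs_re_add_abs_im _
    _ ≤ |t| + 1 + Real.pi := by
        rw [Complex.log_re, Complex.log_im]
        exact add_le_add hlog (Complex.abs_arg_le_pi s)

/-- A Gaussian bound on the integrand, uniform for `z` in a disc. -/
theorem norm_pcKernel_le {σ : ℝ} (hσ : |σ| = 1) (b : ℂ) {z : ℂ} {R : ℝ} (hz : ‖z‖ ≤ R) (t : ℝ) :
    ‖pcKernel σ b z t‖ ≤
      Real.exp ((R + ‖b‖) ^ 2 + R + ‖b‖ * (1 + Real.pi) + 1 / 2) *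
        Real.exp (-(1 / 4) * t ^ 2) := by
  rw [pcKernel, ← Complex.exp_add, Complex.norm_exp, ← Real.exp_add, Real.exp_le_exp]
  have hσ2 : σ ^ 2 = 1 := by rw [← sq_abs, hσ, one_pow]
  have hsq : ((t + σ * Complex.I : ℂ) ^ 2 / 2).re = (t ^ 2 - 1) / 2 := by
    rw [Complex.div_ofNat_re, ← hσ2]
    simp [pow_two]
  have hlin : (z * (t + σ * Complex.I)).re ≤ R * (|t| + 1) := by
    refine (Complex.re_le_norm _).trans ?_
    rw [norm_mul]
    exact mul_le_mul hz (norm_line_le hσ t) (norm_nonneg _) ((norm_nonneg z).trans hz)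
  have hpow : (b * Complex.log (t + σ * Complex.I)).re ≤ ‖b‖ * (|t| + 1 + Real.pi) := by
    refine (Complex.re_le_norm _).trans ?_
    rw [norm_mul]
    exact mul_le_mul_of_nonneg_left (norm_log_line_le hσ t) (norm_nonneg b)
  rw [Complex.add_re, Complex.sub_re, hsq]
  nlinarith [sq_nonneg (|t| / 2 - (R + ‖b‖)), sq_abs t]

theorem integrable_gaussian_majorant (C : ℝ) :
    Integrable fun t : ℝ => C * Real.exp (-(1 / 4) * t ^ 2) :=
  (integrable_exp_neg_mul_sq (by norm_num)).const_mul C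

theorem integrable_pcKernel {σ : ℝ} (hσ : |σ| = 1) (b z : ℂ) : Integrable (pcKernel σ b z) :=
  (integrable_gaussian_majorant _).mono' (continuous_pcKernel hσ b z).aestronglyMeasurable
    (Eventually.of_forall (norm_pcKernel_le hσ b le_rfl))

theorem hasDerivAt_integral_pcKernel {σ : ℝ} (hσ : |σ| = 1) (b z : ℂ) :
    HasDerivAt (fun w => ∫ t, pcKernel σ b w t) (∫ t, pcKernel σ (b + 1) z t) z := by
  refine (hasDerivAt_integral_of_dominated_loc_of_deriv_le
    (F' := pcKernel σ (b + 1)) (Metric.ball_mem_nhds z one_pos)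
    (Eventually.of_forall fun w => (continuous_pcKernel hσ b w).aestronglyMeasurable)
    (integrable_pcKernel hσ b z) (continuous_pcKernel hσ (b + 1) z).aestronglyMeasurable
    (Eventually.of_forall fun t w hw =>
      norm_pcKernel_le (R := ‖z‖ + 1) hσ (b + 1) ?_ t)
    (integrable_gaussian_majorant _) (Eventually.of_forall fun t w _ => ?_)).2
  · have h := norm_le_norm_add_norm_sub' w z
    rw [mem_ball_iff_norm] at hw
    linarith
  · rw [pcKernel_add_one hσ]
    have h := ((((hasDerivAt_id w).mul_const (t + σ * Complex.I : ℂ)).sub_const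
      ((t + σ * Complex.I : ℂ) ^ 2 / 2)).cexp).mul_const
      (Complex.exp (b * Complex.log (t + σ * Complex.I)))
    refine h.congr_deriv ?_
    simp only [pcKernel, id]
    ring

theorem hasDerivAt_pcKernel {σ : ℝ} (hσ : |σ| = 1) (b z : ℂ) (t : ℝ) :
    HasDerivAt (pcKernel σ (b + 1) z)
      (z * pcKernel σ (b + 1) z t - pcKernel σ (b + 1 + 1) z t + (b + 1) * pcKernel σ b z t) t := by
  have hslit := line_mem_slitPlane hσ t
  have h0 := Complex.slitPlane_ne_zero hslit
  have hs : HasDerivAt (fun x : ℝ => (x + σ * Complex.I : ℂ)) 1 t :=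
    (Complex.ofRealCLM.hasDerivAt (x := t)).add_const _
  have h := (((hs.const_mul z).sub ((hs.pow 2).div_const 2)).cexp).mul
    (((hs.clog_real hslit).const_mul (b + 1)).cexp)
  refine h.congr_deriv ?_
  have hb := pcKernel_add_one hσ b z t
  rw [pcKernel_add_one hσ (b + 1)]
  have hdiv : pcKernel σ b z t = pcKernel σ (b + 1) z t / (t + σ * Complex.I) := by
    rw [hb]; field_simp
  rw [hdiv]
  simp only [pcKernel, Pi.sub_apply, Pi.pow_apply]
  field_simp
  push_cast
  ring

/-- The recurrence obtained by integrating the `t`-derivative of the integrand over the line. -/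
theorem integral_pcKernel_recurrence {σ : ℝ} (hσ : |σ| = 1) (b z : ℂ) :
    ∫ t, pcKernel σ (b + 1 + 1) z t =
      z * (∫ t, pcKernel σ (b + 1) z t) + (b + 1) * ∫ t, pcKernel σ b z t := by
  have i0 := (integrable_pcKernel hσ b z).const_mul (b + 1)
  have i1 := (integrable_pcKernel hσ (b + 1) z).const_mul z
  have i2 := integrable_pcKernel hσ (b + 1 + 1) z
  have h := integral_eq_zero_of_hasDerivAt_of_integrable (hasDerivAt_pcKernel hσ b z)
    ((i1.sub i2).add i0) (integrable_pcKernel hσ (b + 1) z)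
  rw [integral_add (by exact i1.sub i2) i0, integral_sub i1 i2, integral_const_mul,
    integral_const_mul] at h
  linear_combination -h

/-- The parabolic cylinder functions U_a^± are entire and satisfy the Weber
equation (U_a^±)''(z) = (z²/4 + a)·U_a^±(z). -/
theorem Upc_entire_and_weber (a : ℂ) (σ : ℝ) (hσ : σ = 1 ∨ σ = -1) :
    Differentiable ℂ (Upc σ a) ∧
      ∀ z : ℂ, deriv (deriv (Upc σ a)) z = (z^2/4 + a) * Upc σ a z := by
  have hσ' : |σ| = 1 := by rcases hσ with rfl | rfl <;> simp
  set b : ℂ := a - 1 / 2 with hb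
  have hU : Upc σ a = fun z => Complex.exp (-z ^ 2 / 4) * ∫ t, pcKernel σ b z t := rfl
  have hgauss (z : ℂ) : HasDerivAt (fun z : ℂ => Complex.exp (-z ^ 2 / 4))
      (Complex.exp (-z ^ 2 / 4) * (-z / 2)) z := by
    refine (((hasDerivAt_id z).pow 2).neg.div_const 4).cexp.congr_deriv ?_
    simp only [Pi.neg_apply, Pi.pow_apply, id]
    push_cast
    ring
  have hfirst (z : ℂ) := (hgauss z).mul (hasDerivAt_integral_pcKernel hσ' b z)
  have hderiv : deriv (Upc σ a) = fun z => Complex.exp (-z ^ 2 / 4) *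
      ((∫ t, pcKernel σ (b + 1) z t) - z / 2 * ∫ t, pcKernel σ b z t) := by
    funext z
    rw [hU]
    refine (hfirst z).deriv.trans ?_
    ring
  refine ⟨fun z => (hfirst z).differentiableAt, fun z => ?_⟩
  have hsecond := (hgauss z).mul ((hasDerivAt_integral_pcKernel hσ' (b + 1) z).sub
    (((hasDerivAt_id z).div_const 2).mul (hasDerivAt_integral_pcKernel hσ' b z)))
  rw [hderiv, hU]
  refine hsecond.deriv.trans ?_
  rw [integral_pcKernel_recurrence hσ']
  simp only [Pi.sub_apply, Pi.mul_apply, id]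
  rw [hb]
  ring
end

section
/- Let a ∈ ℂ be such that a − 1/2 is not a nonnegative integer (i.e. a ∉ {1/2, 3/2, 5/2, …}). Then the functions U_a^+ and U_a^− are linearly independent over ℂ: if c₁, c₂ ∈ ℂ satisfy c₁·U_a^+(z) + c₂·U_a^−(z) = 0 for all z ∈ ℂ, then c₁ = c₂ = 0. -/
open Complex MeasureTheory Filter Topology Set

theorem integral_horizontal_line_eq {f : ℂ → ℂ} {y₁ y₂ C : ℝ}
    (hf : DifferentiableOn ℂ f {w | w.im ∈ uIcc y₁ y₂})
    (hC : ∀ w : ℂ, w.im ∈ uIcc y₁ y₂ → ‖f w‖ ≤ C * Real.exp (-(1 / 4) * w.re ^ 2)) :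
    ∫ t : ℝ, f (t + y₁ * I) = ∫ t : ℝ, f (t + y₂ * I) := by
  have hgauss : Integrable (fun t : ℝ => C * Real.exp (-(1 / 4) * t ^ 2)) :=
    (integrable_exp_neg_mul_sq (by norm_num)).const_mul C
  have hint : ∀ y ∈ uIcc y₁ y₂, Integrable (fun t : ℝ => f (t + y * I)) := by
    intro y hy
    have hcont : Continuous (fun t : ℝ => f (t + y * I)) :=
      hf.continuousOn.comp_continuous (by fun_prop) (fun t => by simpa using hy)
    refine hgauss.mono' hcont.aestronglyMeasurable (Eventually.of_forall fun t => ?_)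
    simpa using hC (t + y * I) (by simpa using hy)
  have hlim (y : ℝ) (hy : y ∈ uIcc y₁ y₂) :
      Tendsto (fun T : ℝ => ∫ t in (-T)..T, f (t + y * I)) atTop (𝓝 (∫ t : ℝ, f (t + y * I))) :=
    intervalIntegral_tendsto_integral (hint y hy) tendsto_neg_atTop_atBot tendsto_id
  have hdecay : Tendsto (fun T : ℝ => C * Real.exp (-(1 / 4) * T ^ 2) * |y₂ - y₁|) atTop (𝓝 0) := by
    have h1 : Tendsto (fun T : ℝ => -(1 / 4) * T ^ 2) atTop atBot :=
      (tendsto_pow_atTop two_ne_zero).const_mul_atTop_of_neg (by norm_num)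
    simpa using ((Real.tendsto_exp_atBot.comp h1).const_mul C).mul_const |y₂ - y₁|
  have hvert (T : ℝ) : ‖∫ y in y₁..y₂, f (T + y * I)‖
      ≤ C * Real.exp (-(1 / 4) * T ^ 2) * |y₂ - y₁| := by
    refine intervalIntegral.norm_integral_le_of_norm_le_const fun y hy => ?_
    simpa using hC (T + y * I) (by simpa using uIoc_subset_uIcc hy)
  have hV : Tendsto (fun T : ℝ => ∫ y in y₁..y₂, f (T + y * I)) atTop (𝓝 0) :=
    squeeze_zero_norm hvert hdecay
  have hV' : Tendsto (fun T : ℝ => ∫ y in y₁..y₂, f ((-T : ℝ) + y * I)) atTop (𝓝 0) :=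
    squeeze_zero_norm (fun T => by simpa only [neg_sq] using hvert (-T)) hdecay
  have hrect (T : ℝ) : (∫ t in (-T)..T, f (t + y₁ * I)) - (∫ t in (-T)..T, f (t + y₂ * I)) +
      I • (∫ y in y₁..y₂, f (T + y * I)) - I • (∫ y in y₁..y₂, f ((-T : ℝ) + y * I)) = 0 := by
    have := integral_boundary_rect_eq_zero_of_differentiableOn f (⟨-T, y₁⟩ : ℂ) ⟨T, y₂⟩
      (hf.mono fun w hw => hw.2)
    simpa using this
  have := (((hlim y₁ left_mem_uIcc).sub (hlim y₂ right_mem_uIcc)).add (hV.const_smul I)).sub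
    (hV'.const_smul I)
  simp only [hrect, smul_zero, add_zero, sub_zero] at this
  exact sub_eq_zero.1 (tendsto_nhds_unique this tendsto_const_nhds)

/-- The weight `exp (-w² / 2) * w ^ s` of the contour integral, on the principal branch. -/
noncomputable def pcWeight (s w : ℂ) : ℂ := exp (-w ^ 2 / 2) * exp (s * log w)

theorem norm_log_le_norm_add_inv {w : ℂ} (hw : w ≠ 0) :
    ‖log w‖ ≤ ‖w‖ + ‖w‖⁻¹ + Real.pi := by
  have hpos : 0 < ‖w‖ := norm_pos_iff.2 hw
  have h1 : |Real.log ‖w‖| ≤ ‖w‖ + ‖w‖⁻¹ := by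
    rw [abs_le]
    have h2 := Real.log_le_sub_one_of_pos hpos
    have h3 := Real.one_sub_inv_le_log_of_pos hpos
    have h4 := inv_pos.2 hpos
    constructor <;> linarith
  have h2 := norm_le_abs_re_add_abs_im (log w)
  rw [log_re, log_im] at h2
  have h3 := abs_arg_le_pi w
  linarith

theorem exists_norm_pcWeight_le (s : ℂ) {m : ℝ} (hm : 0 < m) (M : ℝ) :
    ∃ C : ℝ, ∀ w : ℂ, m ≤ |w.im| → |w.im| ≤ M →
      ‖pcWeight s w‖ ≤ C * Real.exp (-(1 / 4) * w.re ^ 2) := by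
  refine ⟨Real.exp (M ^ 2 / 2 + ‖s‖ ^ 2 + ‖s‖ * (M + m⁻¹ + Real.pi)), fun w h1 h2 => ?_⟩
  have hw : m ≤ ‖w‖ := h1.trans (abs_im_le_norm w)
  have hw0 : w ≠ 0 := norm_pos_iff.1 (hm.trans_le hw)
  have hlog : ‖log w‖ ≤ |w.re| + M + m⁻¹ + Real.pi := by
    have := norm_log_le_norm_add_inv hw0
    have := norm_le_abs_re_add_abs_im w
    have := inv_anti₀ hm hw
    linarith
  have hsq : w.im ^ 2 ≤ M ^ 2 := sq_le_sq.2 (h2.trans (le_abs_self M))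
  have hs : (s * log w).re ≤ ‖s‖ * (|w.re| + M + m⁻¹ + Real.pi) :=
    (re_le_norm _).trans (by rw [norm_mul]; gcongr)
  have hre : (-w ^ 2 / 2).re = -(w.re ^ 2 - w.im ^ 2) / 2 := by
    simp [sq]
  rw [pcWeight, norm_mul, norm_exp, norm_exp, ← Real.exp_add, ← Real.exp_add, hre]
  refine Real.exp_le_exp.2 ?_
  nlinarith [sq_nonneg (|w.re| / 2 - ‖s‖), sq_abs w.re]

theorem differentiableAt_pcWeight (s : ℂ) {w : ℂ} (hw : w ∈ slitPlane) :
    DifferentiableAt ℂ (pcWeight s) w := by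
  unfold pcWeight
  have := differentiableAt_log hw
  fun_prop

theorem continuous_pcWeight_line (s : ℂ) {y : ℝ} (hy : y ≠ 0) :
    Continuous (fun t : ℝ => pcWeight s (t + y * I)) := by
  refine continuous_iff_continuousAt.2 fun t => ?_
  have h : ContinuousAt (pcWeight s) (t + y * I) :=
    (differentiableAt_pcWeight s (Or.inr (by simpa using hy))).continuousAt
  exact h.comp (f := fun t : ℝ => (t + y * I : ℂ)) (by fun_prop)

theorem integrable_pcWeight_line (s : ℂ) {y : ℝ} (hy : y ≠ 0) :
    Integrable (fun t : ℝ => pcWeight s (t + y * I)) := by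
  obtain ⟨C, hC⟩ := exists_norm_pcWeight_le s (abs_pos.2 hy) |y|
  refine ((integrable_exp_neg_mul_sq (b := 1 / 4) (by norm_num)).const_mul C).mono'
    (continuous_pcWeight_line s hy).aestronglyMeasurable (Eventually.of_forall fun t => ?_)
  simpa using hC (t + y * I) (by simp) (by simp)

/-- The Fourier-type integral of `pcWeight s` along the horizontal line at height `y`. -/
noncomputable def pcTransform (y : ℝ) (s : ℂ) (v : ℝ) : ℂ :=
  ∫ t : ℝ, exp (-2 * Real.pi * v * I * (t + y * I)) * pcWeight s (t + y * I)

theorem norm_exp_neg_two_pi_mul_I (v : ℝ) (w : ℂ) :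
    ‖exp (-2 * Real.pi * v * I * w)‖ = Real.exp (2 * Real.pi * v * w.im) := by
  rw [norm_exp]
  simp

theorem pcTransform_eq_of_mul_pos (s : ℂ) (v : ℝ) {y₁ y₂ : ℝ} (h : 0 < y₁ * y₂) :
    pcTransform y₁ s v = pcTransform y₂ s v := by
  have hne : y₁ ≠ 0 ∧ y₂ ≠ 0 := mul_ne_zero_iff.1 h.ne'
  have hm : 0 < min |y₁| |y₂| := lt_min (abs_pos.2 hne.1) (abs_pos.2 hne.2)
  have hbd : ∀ y ∈ uIcc y₁ y₂, min |y₁| |y₂| ≤ |y| ∧ |y| ≤ max |y₁| |y₂| := by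
    intro y hy
    rcases mul_pos_iff.1 h with ⟨h1, h2⟩ | ⟨h1, h2⟩ <;>
      rcases mem_uIcc.1 hy with ⟨h3, h4⟩ | ⟨h3, h4⟩
    · rw [abs_of_pos h1, abs_of_pos h2, abs_of_pos (h1.trans_le h3)]
      exact ⟨min_le_of_left_le h3, le_max_of_le_right h4⟩
    · rw [abs_of_pos h1, abs_of_pos h2, abs_of_pos (h2.trans_le h3)]
      exact ⟨min_le_of_right_le h3, le_max_of_le_left h4⟩
    · rw [abs_of_neg h1, abs_of_neg h2, abs_of_neg (h4.trans_lt h2)]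
      exact ⟨min_le_of_right_le (by linarith), le_max_of_le_left (by linarith)⟩
    · rw [abs_of_neg h1, abs_of_neg h2, abs_of_neg (h4.trans_lt h1)]
      exact ⟨min_le_of_left_le (by linarith), le_max_of_le_right (by linarith)⟩
  obtain ⟨C, hC⟩ := exists_norm_pcWeight_le s hm (max |y₁| |y₂|)
  refine integral_horizontal_line_eq
    (f := fun w => exp (-2 * Real.pi * v * I * w) * pcWeight s w)
    (C := Real.exp (2 * Real.pi * |v| * max |y₁| |y₂|) * C) (fun w hw => ?_) (fun w hw => ?_)
  · have hw0 : w.im ≠ 0 := abs_pos.1 (hm.trans_le (hbd _ hw).1)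
    have := differentiableAt_pcWeight s (w := w) (Or.inr hw0)
    exact DifferentiableAt.differentiableWithinAt (by fun_prop)
  · rw [norm_mul, norm_exp_neg_two_pi_mul_I, mul_assoc (Real.exp _)]
    have hle : 2 * Real.pi * v * w.im ≤ 2 * Real.pi * |v| * max |y₁| |y₂| := by
      have h1 : v * w.im ≤ |v| * max |y₁| |y₂| :=
        (le_abs_self _).trans (by rw [abs_mul]; gcongr; exact (hbd _ hw).2)
      nlinarith [Real.pi_pos]
    gcongr
    exact hC w (hbd _ hw).1 (hbd _ hw).2

open scoped FourierTransform in
theorem fourier_pcWeight_line (s : ℂ) (y v : ℝ) :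
    𝓕 (fun t : ℝ => pcWeight s (t + y * I)) v
      = exp (-2 * Real.pi * v * y) * pcTransform y s v := by
  rw [Real.fourier_real_eq_integral_exp_smul, pcTransform, ← integral_const_mul]
  refine integral_congr_ae (Eventually.of_forall fun t => ?_)
  simp only [smul_eq_mul, ← mul_assoc, ← exp_add]
  congr 2
  push_cast
  linear_combination (2 * Real.pi * v * y : ℂ) * I_sq

theorem norm_pcTransform_le (y : ℝ) (s : ℂ) (v : ℝ) :
    ‖pcTransform y s v‖ ≤
      Real.exp (2 * Real.pi * v * y) * ∫ t : ℝ, ‖pcWeight s (t + y * I)‖ := by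
  refine (norm_integral_le_integral_norm _).trans_eq ?_
  rw [← integral_const_mul]
  refine integral_congr_ae (Eventually.of_forall fun t => ?_)
  simp only [norm_mul, norm_exp_neg_two_pi_mul_I]
  simp

theorem continuous_pcTransform {y : ℝ} (hy : y ≠ 0) (s : ℂ) : Continuous (pcTransform y s) := by
  have h1 := VectorFourier.fourierIntegral_continuous Real.continuous_fourierChar
    (L := innerₗ ℝ) (by exact continuous_inner) (integrable_pcWeight_line s hy)
  have h2 : pcTransform y s = fun v : ℝ =>
      exp (2 * Real.pi * v * y) * VectorFourier.fourierIntegral Real.fourierChar volume (innerₗ ℝ)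
        (fun t : ℝ => pcWeight s (t + y * I)) v := by
    funext v
    have h3 := fourier_pcWeight_line s y v
    rw [Real.fourier_eq] at h3
    rw [VectorFourier.fourierIntegral]
    simp only [innerₗ_apply_apply]
    rw [h3, ← mul_assoc, ← exp_add]
    simp
  rw [h2]
  fun_prop

/-- The inverse Fourier transform of `ψ`, extended to complex arguments. -/
noncomputable def pcInverse (ψ : ℝ → ℂ) (w : ℂ) : ℂ :=
  ∫ v : ℝ, exp (2 * Real.pi * v * I * w) * ψ v

theorem norm_exp_mul_le_of_decay {ψ : ℝ → ℂ} {C : ℝ}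
    (hψ : ∀ v, ‖ψ v‖ ≤ C * Real.exp (-4 * Real.pi * |v|)) {w : ℂ} (hw : |w.im| ≤ 1) (v : ℝ) :
    ‖exp (2 * Real.pi * v * I * w) * ψ v‖ ≤ C * (1 + v ^ 2)⁻¹ := by
  have hC : 0 ≤ C := by
    have := (norm_nonneg _).trans (hψ 0)
    simpa using this
  have h1 : ‖exp (2 * Real.pi * v * I * w)‖ ≤ Real.exp (2 * Real.pi * |v|) := by
    rw [norm_exp, Real.exp_le_exp]
    have h2 : -(v * w.im) ≤ |v| * 1 :=
      (neg_le_abs _).trans (by rw [abs_mul]; gcongr)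
    have h3 : (2 * Real.pi * v * I * w).re = 2 * Real.pi * -(v * w.im) := by simp; ring
    rw [h3]
    nlinarith [Real.pi_pos]
  have h4 : Real.exp (2 * Real.pi * |v|) * Real.exp (-4 * Real.pi * |v|) ≤ (1 + v ^ 2)⁻¹ := by
    rw [← Real.exp_add, le_inv_comm₀ (Real.exp_pos _) (by positivity), ← Real.exp_neg]
    have h5 : 1 + |v| ≤ Real.exp |v| := by linarith [Real.add_one_le_exp |v|]
    calc 1 + v ^ 2 ≤ (1 + |v|) ^ 2 := by nlinarith [sq_abs v, abs_nonneg v]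
      _ ≤ Real.exp |v| ^ 2 := by gcongr
      _ = Real.exp (2 * |v|) := by rw [← Real.exp_nat_mul]; norm_num
      _ ≤ _ := by
        rw [Real.exp_le_exp]
        nlinarith [Real.pi_gt_three, abs_nonneg v]
  calc ‖exp (2 * Real.pi * v * I * w) * ψ v‖
      ≤ Real.exp (2 * Real.pi * |v|) * (C * Real.exp (-4 * Real.pi * |v|)) := by
        rw [norm_mul]
        gcongr
        exact hψ v
    _ = C * (Real.exp (2 * Real.pi * |v|) * Real.exp (-4 * Real.pi * |v|)) := by ring
    _ ≤ _ := by gcongr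

theorem continuousOn_pcInverse {ψ : ℝ → ℂ} {C : ℝ} (hcont : Continuous ψ)
    (hψ : ∀ v, ‖ψ v‖ ≤ C * Real.exp (-4 * Real.pi * |v|)) :
    ContinuousOn (pcInverse ψ) {w | |w.im| ≤ 1} :=
  continuousOn_of_dominated (fun w _ => Continuous.aestronglyMeasurable (by fun_prop))
    (fun w hw => Eventually.of_forall (norm_exp_mul_le_of_decay hψ hw))
    (integrable_inv_one_add_sq.const_mul C)
    (Eventually.of_forall fun v => Continuous.continuousOn (by fun_prop))

open scoped FourierTransform in
theorem pcInverse_eq_mul_pcWeight {ψ : ℝ → ℂ} {C : ℝ} {c s : ℂ} {σ : ℝ} (hcont : Continuous ψ)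
    (hψ : ∀ v, ‖ψ v‖ ≤ C * Real.exp (-4 * Real.pi * |v|))
    (hc : ∀ v, ψ v = c * pcTransform σ s v) {w : ℂ} (hw : 0 < σ * w.im) (hw1 : |w.im| ≤ 1) :
    pcInverse ψ w = c * pcWeight s w := by
  have hy : w.im ≠ 0 := (mul_ne_zero_iff.1 hw.ne').2
  set f : ℝ → ℂ := fun t => c * pcWeight s (t + w.im * I) with hf
  have hfint : Integrable f := (integrable_pcWeight_line s hy).const_mul c
  have hFf : 𝓕 f = fun v : ℝ => exp (2 * Real.pi * v * I * (w.im * I)) * ψ v := by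
    funext v
    have h1 := fourier_pcWeight_line s w.im v
    rw [Real.fourier_eq] at h1 ⊢
    have h2 : ∀ t : ℝ, Real.fourierChar (-inner ℝ t v) • f t
        = c * (Real.fourierChar (-inner ℝ t v) • pcWeight s (t + w.im * I)) := fun t => by
      simp only [hf, Circle.smul_def, smul_eq_mul]
      ring
    simp only [h2]
    rw [integral_const_mul, h1, hc v, pcTransform_eq_of_mul_pos s v hw]
    have h3 : (2 * Real.pi * v * I * (w.im * I) : ℂ) = -2 * Real.pi * v * w.im := by
      linear_combination (2 * Real.pi * v * w.im : ℂ) * I_sq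
    rw [h3]
    ring
  have hFint : Integrable (𝓕 f) := by
    rw [hFf]
    refine (integrable_inv_one_add_sq.const_mul C).mono'
      (Continuous.aestronglyMeasurable (by fun_prop)) (Eventually.of_forall fun v => ?_)
    exact norm_exp_mul_le_of_decay hψ (by simpa using hw1) v
  have hinv := hfint.fourierInv_fourier_eq hFint (v := w.re)
    (by have := continuous_pcWeight_line s hy; fun_prop)
  rw [hFf, Real.fourierInv_eq'] at hinv
  simp only [hf, re_add_im] at hinv
  rw [← hinv, pcInverse]
  refine integral_congr_ae (Eventually.of_forall fun v => ?_)
  simp only [smul_eq_mul, ← mul_assoc, ← exp_add]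
  congr 2
  simp only [RCLike.inner_apply, conj_trivial, ofReal_mul, ofReal_ofNat]
  linear_combination (-2 * Real.pi * v * I : ℂ) * re_add_im w

theorem Upc_eq_mul_pcTransform (σ : ℝ) (a : ℂ) (v : ℝ) :
    Upc σ a (-2 * Real.pi * v * I)
      = exp (-(-2 * Real.pi * v * I) ^ 2 / 4) * pcTransform σ (a - 1 / 2) v := by
  rw [Upc, pcTransform]
  congr 1
  refine integral_congr_ae (Eventually.of_forall fun t => ?_)
  simp only [pcWeight, ← exp_add]
  congr 1
  ring

/-- If a function continuous near the real axis agrees with multiples of `pcWeight s` above and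
below it, then both multiples vanish, unless `s` is a natural number. -/
theorem eq_zero_of_continuousOn_of_eq_mul_pcWeight {G : ℂ → ℂ} {c d s : ℂ}
    (hs : ∀ n : ℕ, s ≠ n) (hG : ContinuousOn G {w | |w.im| ≤ 1})
    (hup : ∀ w : ℂ, 0 < w.im → |w.im| ≤ 1 → G w = c * pcWeight s w)
    (hlow : ∀ w : ℂ, w.im < 0 → |w.im| ≤ 1 → G w = d * pcWeight s w) :
    c = 0 ∧ d = 0 := by
  have hstrip (t : ℝ) : {w : ℂ | |w.im| ≤ 1} ∈ 𝓝 (t : ℂ) :=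
    (continuous_abs.comp continuous_im).continuousAt.preimage_mem_nhds
      (Iic_mem_nhds (by simp))
  have hGt (t : ℝ) : ContinuousAt G t := hG.continuousAt (hstrip t)
  have hU (t : ℝ) : (𝓝[{w : ℂ | 0 < w.im}] (t : ℂ)).NeBot := by
    refine mem_closure_iff_nhdsWithin_neBot.1 ?_
    rw [closure_setOfPred_lt_im]
    simp
  have hL (t : ℝ) : (𝓝[{w : ℂ | w.im < 0}] (t : ℂ)).NeBot := by
    refine mem_closure_iff_nhdsWithin_neBot.1 ?_
    rw [closure_setOfPred_im_lt]
    simp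
  have hval {S : Set ℂ} {e l : ℂ} {t : ℝ} (hne : (𝓝[S] (t : ℂ)).NeBot)
      (hS : ∀ w ∈ S, |w.im| ≤ 1 → G w = e * pcWeight s w)
      (hl : Tendsto log (𝓝[S] (t : ℂ)) (𝓝 l)) :
      G t = e * (exp (-(t : ℂ) ^ 2 / 2) * exp (s * l)) := by
    have hgauss : Tendsto (fun w : ℂ => exp (-w ^ 2 / 2)) (𝓝[S] (t : ℂ))
        (𝓝 (exp (-(t : ℂ) ^ 2 / 2))) :=
      (Continuous.tendsto (by fun_prop) _).mono_left nhdsWithin_le_nhds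
    refine tendsto_nhds_unique ((hGt t).tendsto.mono_left nhdsWithin_le_nhds)
      (((hgauss.mul (hl.const_mul s).cexp).const_mul e).congr' ?_)
    filter_upwards [self_mem_nhdsWithin, nhdsWithin_le_nhds (hstrip t)] with w h1 h2
    exact (hS w h1 h2).symm
  have hcd : c = d := by
    have hlog : Tendsto log (𝓝 ((1 : ℝ) : ℂ)) (𝓝 (log ((1 : ℝ) : ℂ))) :=
      (continuousAt_clog (by simp)).tendsto
    have h := (hval (hU 1) hup (hlog.mono_left nhdsWithin_le_nhds)).symm.trans
      (hval (hL 1) hlow (hlog.mono_left nhdsWithin_le_nhds))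
    exact mul_right_cancel₀ (mul_ne_zero (exp_ne_zero _) (exp_ne_zero _)) h
  subst hcd
  refine (and_self_iff).2 ?_
  by_contra hc
  have hexp : exp (s * (Real.pi * I)) = exp (s * -(Real.pi * I)) := by
    have h1 := (tendsto_log_nhdsWithin_im_nonneg_of_re_neg_of_im_zero
      (z := ((-1 : ℝ) : ℂ)) (by simp) (by simp)).mono_left
      (nhdsWithin_mono _ (fun w (hw : 0 < w.im) => hw.le))
    have h2 := tendsto_log_nhdsWithin_im_neg_of_re_neg_of_im_zero
      (z := ((-1 : ℝ) : ℂ)) (by simp) (by simp)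
    have h := (hval (hU (-1)) hup h1).symm.trans (hval (hL (-1)) hlow h2)
    simpa [hc] using h
  obtain ⟨n, hn⟩ := exp_eq_exp_iff_exists_int.1 hexp
  have hsn : s = n := by
    have : (2 * Real.pi * I : ℂ) ≠ 0 := by simp [Real.pi_ne_zero]
    refine mul_right_cancel₀ this ?_
    linear_combination hn
  obtain ⟨m, rfl | rfl⟩ := n.eq_nat_or_neg
  · exact hs m (by simpa using hsn)
  have hm : m ≠ 0 := by
    rintro rfl
    exact hs 0 (by simpa using hsn)
  have := hU 0
  have h0 : Tendsto (fun w : ℂ => G w * w ^ m) (𝓝[{w : ℂ | 0 < w.im}] ((0 : ℝ) : ℂ)) (𝓝 0) := by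
    have h1 : Tendsto (fun w : ℂ => w ^ m) (𝓝 ((0 : ℝ) : ℂ)) (𝓝 0) := by
      simpa [hm] using (continuous_pow (M := ℂ) m).tendsto ((0 : ℝ) : ℂ)
    simpa using ((hGt 0).tendsto.mul h1).mono_left nhdsWithin_le_nhds
  have hc0 : Tendsto (fun w : ℂ => c * exp (-w ^ 2 / 2))
      (𝓝[{w : ℂ | 0 < w.im}] ((0 : ℝ) : ℂ)) (𝓝 c) := by
    have h1 := Continuous.tendsto (f := fun w : ℂ => c * exp (-w ^ 2 / 2)) (by fun_prop)
      ((0 : ℝ) : ℂ)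
    simpa using h1.mono_left nhdsWithin_le_nhds
  refine hc (tendsto_nhds_unique (hc0.congr' ?_) h0)
  filter_upwards [self_mem_nhdsWithin, nhdsWithin_le_nhds (hstrip 0)] with w h1 h2
  have hw : w ≠ 0 := by
    rintro rfl
    simp at h1
  rw [hup w h1 h2, pcWeight, hsn]
  push_cast
  rw [neg_mul, exp_neg, exp_nat_mul, exp_log hw]
  field_simp

/-- For a − 1/2 not a nonnegative integer, the parabolic cylinder functions
U_a^+ and U_a^− are linearly independent over ℂ. -/
theorem Upc_linearly_independent (a : ℂ) (ha : ∀ n : ℕ, a ≠ (n : ℂ) + 1/2)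
    (c₁ c₂ : ℂ) (h : ∀ z : ℂ, c₁ * Upc 1 a z + c₂ * Upc (-1) a z = 0) :
    c₁ = 0 ∧ c₂ = 0 := by
  set s := a - 1 / 2 with hs
  set ψ : ℝ → ℂ := fun v => c₁ * pcTransform 1 s v
  have hψ' : ∀ v, ψ v = -c₂ * pcTransform (-1) s v := by
    intro v
    have h1 := h (-2 * Real.pi * v * I)
    rw [Upc_eq_mul_pcTransform, Upc_eq_mul_pcTransform, ← hs] at h1
    refine mul_left_cancel₀ (exp_ne_zero (-(-2 * Real.pi * v * I) ^ 2 / 4)) ?_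
    linear_combination h1
  have hcont : Continuous ψ := continuous_const.mul (continuous_pcTransform one_ne_zero s)
  obtain ⟨C, hC⟩ : ∃ C : ℝ, ∀ v, ‖ψ v‖ ≤ C * Real.exp (-4 * Real.pi * |v|) := by
    set A := ∫ t : ℝ, ‖pcWeight s (t + (2 : ℝ) * I)‖
    set B := ∫ t : ℝ, ‖pcWeight s (t + (-2 : ℝ) * I)‖
    have hA : 0 ≤ A := integral_nonneg fun _ => norm_nonneg _
    have hB : 0 ≤ B := integral_nonneg fun _ => norm_nonneg _
    refine ⟨‖c₁‖ * A + ‖c₂‖ * B, fun v => ?_⟩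
    rcases le_total 0 v with hv | hv
    · have h1 := norm_pcTransform_le (-2) s v
      rw [hψ' v, pcTransform_eq_of_mul_pos (y₂ := -2) s v (by norm_num), norm_mul, norm_neg,
        abs_of_nonneg hv]
      calc ‖c₂‖ * ‖pcTransform (-2) s v‖
          ≤ ‖c₂‖ * (Real.exp (2 * Real.pi * v * -2) * B) := by gcongr
        _ = ‖c₂‖ * B * Real.exp (-4 * Real.pi * v) := by ring_nf
        _ ≤ _ := by gcongr; exact le_add_of_nonneg_left (by positivity)
    · have h1 := norm_pcTransform_le 2 s v
      rw [show ψ v = c₁ * pcTransform 1 s v from rfl,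
        pcTransform_eq_of_mul_pos (y₂ := 2) s v (by norm_num), norm_mul,
        abs_of_nonpos hv]
      calc ‖c₁‖ * ‖pcTransform 2 s v‖
          ≤ ‖c₁‖ * (Real.exp (2 * Real.pi * v * 2) * A) := by gcongr
        _ = ‖c₁‖ * A * Real.exp (-4 * Real.pi * -v) := by ring_nf
        _ ≤ _ := by gcongr; exact le_add_of_nonneg_right (by positivity)
  have := eq_zero_of_continuousOn_of_eq_mul_pcWeight (c := c₁) (d := -c₂) (s := s)
    (fun n hn => ha n (by rw [← hn, hs]; ring)) (continuousOn_pcInverse hcont hC)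
    (fun w h1 h2 => pcInverse_eq_mul_pcWeight hcont hC (fun _ => rfl) (by simpa using h1) h2)
    (fun w h1 h2 => pcInverse_eq_mul_pcWeight hcont hC hψ' (by simpa using h1) h2)
  simpa using this
end

section
/- Let α ∈ (0, π), ρ ≥ 0 and β, δ ∈ [−π, π]. Then for every u ∈ ℝ with u ≠ 0, | h(u)/u² − cos(2α + δ) + ρ·sin(α + β)/(2·sin α) | ≤ ρ/(2·sin α). -/
open Real in
theorem one_add_sq_add_two_mul_cos_pos {α : ℝ} (hα : 0 < sin α) (s : ℝ) :
    0 < 1 + s ^ 2 + 2 * s * cos α := by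
  nlinarith [sq_nonneg (s + cos α), sin_sq_add_cos_sq α, pow_pos hα 2]

open Real in
/-- The points `1 / (s + exp (-iα))`, `s` real, lie on the circle of centre `i / (2 sin α)` and
radius `1 / (2 sin α)`; this is the resulting bound on the real part after a rotation by `α + β`. -/
theorem abs_cos_add_mul_cos_div_add_le {α : ℝ} (hα : 0 < sin α) (β s : ℝ) :
    |(cos (2 * α + β) + s * cos (α + β)) / (1 + s ^ 2 + 2 * s * cos α)
      + sin (α + β) / (2 * sin α)| ≤ 1 / (2 * sin α) := by
  have hD := one_add_sq_add_two_mul_cos_pos hα s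
  have hcos : cos (2 * α + β) = cos α * cos (α + β) - sin α * sin (α + β) := by
    rw [← cos_add]; ring_nf
  have hsq : (2 * sin α * (s + cos α) * cos (α + β)
      + sin (α + β) * ((s + cos α) ^ 2 - sin α ^ 2)) ^ 2
      ≤ ((s + cos α) ^ 2 + sin α ^ 2) ^ 2 := by
    have hCS : ((s + cos α) ^ 2 + sin α ^ 2) ^ 2
        = ((2 * sin α * (s + cos α)) ^ 2 + ((s + cos α) ^ 2 - sin α ^ 2) ^ 2)
          * (sin (α + β) ^ 2 + cos (α + β) ^ 2) := by
      rw [sin_sq_add_cos_sq]; ring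
    rw [hCS]
    nlinarith [sq_nonneg (2 * sin α * (s + cos α) * sin (α + β)
      - cos (α + β) * ((s + cos α) ^ 2 - sin α ^ 2))]
  have hDeq : 1 + s ^ 2 + 2 * s * cos α = (s + cos α) ^ 2 + sin α ^ 2 := by
    linear_combination -sin_sq_add_cos_sq α
  rw [hDeq] at hD ⊢
  have hquot : (cos (2 * α + β) + s * cos (α + β)) / ((s + cos α) ^ 2 + sin α ^ 2)
      + sin (α + β) / (2 * sin α)
      = (2 * sin α * (s + cos α) * cos (α + β) + sin (α + β) * ((s + cos α) ^ 2 - sin α ^ 2))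
        / ((s + cos α) ^ 2 + sin α ^ 2) * (1 / (2 * sin α)) := by
    rw [hcos]
    field_simp
    ring
  rw [hquot, abs_mul, abs_of_pos (by positivity : 0 < 1 / (2 * sin α)), abs_div, abs_of_pos hD]
  exact mul_le_of_le_one_left (by positivity)
    ((div_le_one hD).2 (abs_le_of_sq_le_sq hsq hD.le))

theorem abs_integral_mul_id_le {f : ℝ → ℝ} {M : ℝ} (hf : ∀ s, |f s| ≤ M) (u : ℝ) :
    |∫ s in (0 : ℝ)..u, s * f s| ≤ M * u ^ 2 / 2 := by
  have hscale : (∫ s in (0 : ℝ)..u, s * f s) = u * ∫ t in (0 : ℝ)..1, u * t * f (u * t) := by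
    simpa using (intervalIntegral.mul_integral_comp_mul_left (a := 0) (b := 1)
      (f := fun s => s * f s) u).symm
  have hle : ‖∫ t in (0 : ℝ)..1, u * t * f (u * t)‖ ≤ ∫ t in (0 : ℝ)..1, |u| * M * t := by
    refine intervalIntegral.norm_integral_le_of_norm_le zero_le_one
      (Filter.Eventually.of_forall fun t ht => ?_)
      (Continuous.intervalIntegrable (by fun_prop) _ _)
    rw [Real.norm_eq_abs, abs_mul, abs_mul, abs_of_pos ht.1]
    have := mul_le_mul_of_nonneg_left (hf (u * t)) (mul_nonneg (abs_nonneg u) ht.1.le)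
    linarith
  rw [intervalIntegral.integral_const_mul, integral_id, Real.norm_eq_abs] at hle
  rw [hscale, abs_mul]
  calc |u| * |∫ t in (0 : ℝ)..1, u * t * f (u * t)|
      ≤ |u| * (|u| * M * ((1 ^ 2 - 0 ^ 2) / 2)) := by gcongr
    _ = M * |u| ^ 2 / 2 := by ring
    _ = M * u ^ 2 / 2 := by rw [sq_abs]

/-- Lemma 3.1: a quantitative bound for the function h built from the integrals
I₁, I₂ appearing in the WKB analysis of the parabolic cylinder integral. -/
theorem h_over_u_sq_estimate
    (α ρ β δ : ℝ) (hα : α ∈ Set.Ioo 0 Real.pi) (hρ : 0 ≤ ρ)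
    (hβ : β ∈ Set.Icc (-Real.pi) Real.pi) (hδ : δ ∈ Set.Icc (-Real.pi) Real.pi)
    (u : ℝ) (hu : u ≠ 0) :
    |(Real.cos (2*α + δ) * u ^ 2 +
        2 * ρ * (Real.cos (2*α + β) * (∫ s in (0:ℝ)..u, s / (1 + s^2 + 2*s*Real.cos α)) +
          Real.cos (α + β) * (∫ s in (0:ℝ)..u, s^2 / (1 + s^2 + 2*s*Real.cos α)))) / u ^ 2
      - Real.cos (2*α + δ) + ρ * Real.sin (α + β) / (2 * Real.sin α)|
      ≤ ρ / (2 * Real.sin α) := by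
  have hsin : 0 < Real.sin α := Real.sin_pos_of_mem_Ioo hα
  have hD (s : ℝ) : 1 + s ^ 2 + 2 * s * Real.cos α ≠ 0 :=
    (one_add_sq_add_two_mul_cos_pos hsin s).ne'
  have hint₁ : IntervalIntegrable (fun s : ℝ => s / (1 + s ^ 2 + 2 * s * Real.cos α))
      MeasureTheory.volume 0 u :=
    (Continuous.div (by fun_prop) (by fun_prop) hD).intervalIntegrable _ _
  have hint₂ : IntervalIntegrable (fun s : ℝ => s ^ 2 / (1 + s ^ 2 + 2 * s * Real.cos α))
      MeasureTheory.volume 0 u :=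
    (Continuous.div (by fun_prop) (by fun_prop) hD).intervalIntegrable _ _
  have hbound := abs_integral_mul_id_le (abs_cos_add_mul_cos_div_add_le hsin β) u
  have hsplit : (∫ s in (0 : ℝ)..u,
      s * ((Real.cos (2 * α + β) + s * Real.cos (α + β)) / (1 + s ^ 2 + 2 * s * Real.cos α)
        + Real.sin (α + β) / (2 * Real.sin α)))
      = Real.cos (2 * α + β) * (∫ s in (0 : ℝ)..u, s / (1 + s ^ 2 + 2 * s * Real.cos α))
        + Real.cos (α + β) * (∫ s in (0 : ℝ)..u, s ^ 2 / (1 + s ^ 2 + 2 * s * Real.cos α))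
        + Real.sin (α + β) / (2 * Real.sin α) * (u ^ 2 / 2) := by
    have hid : (∫ s in (0 : ℝ)..u, s) = u ^ 2 / 2 := by simp
    rw [← hid, ← intervalIntegral.integral_const_mul, ← intervalIntegral.integral_const_mul,
      ← intervalIntegral.integral_const_mul,
      ← intervalIntegral.integral_add (hint₁.const_mul _) (hint₂.const_mul _),
      ← intervalIntegral.integral_add ((hint₁.const_mul _).add (hint₂.const_mul _))
        (Continuous.intervalIntegrable (by fun_prop) _ _)]
    congr 1 with s
    ring
  rw [hsplit] at hbound
  set I₁ := ∫ s in (0 : ℝ)..u, s / (1 + s ^ 2 + 2 * s * Real.cos α)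
  set I₂ := ∫ s in (0 : ℝ)..u, s ^ 2 / (1 + s ^ 2 + 2 * s * Real.cos α)
  have hrewrite : (Real.cos (2 * α + δ) * u ^ 2
      + 2 * ρ * (Real.cos (2 * α + β) * I₁ + Real.cos (α + β) * I₂)) / u ^ 2
      - Real.cos (2 * α + δ) + ρ * Real.sin (α + β) / (2 * Real.sin α)
      = 2 * ρ / u ^ 2 * (Real.cos (2 * α + β) * I₁ + Real.cos (α + β) * I₂
        + Real.sin (α + β) / (2 * Real.sin α) * (u ^ 2 / 2)) := by
    field_simp
    ring
  have hcoef : 0 ≤ 2 * ρ / u ^ 2 := by positivity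
  rw [hrewrite, abs_mul, abs_of_nonneg hcoef]
  refine (mul_le_mul_of_nonneg_left hbound hcoef).trans_eq ?_
  field_simp
end
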